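/- For the one-sided generalized Pareto density f(x) = (1/σ)(1 + κ x/σ)^{-(1+κ)/κ} with σ > 0, κ > 0, the general power-moment satisfies μ_m^{(n)} = (σ/κ)^m · m! · Γ(n - 1 - m + n/κ) / Γ(n - 1 + n/κ), valid whenever κ < n/(2+m-n) (equivalently n - 1 - m + n/κ > 0). -/

import Mathlib

open MeasureTheory Set Real

/-!
The substitution `y = x / (1 + x)` turns the Beta integral over `(0, 1)` into
`∫ x in Ioi 0, x ^ (α - 1) * (1 + x) ^ (-(α + β)) = B(α, β)`. Up to the factor `σ ^ (-q)`, the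
`q`-th power of the generalized Pareto density is `(1 + κ / σ * x) ^ (-(q + q / κ))`, so after
rescaling its moment of order `p` is a multiple of `B(p + 1, q - 1 - p + q / κ)`. In the quotient by
the moment of order `0`, the factor `σ ^ (-q)` and the common denominator `Γ(q + q / κ)` cancel.
-/

open ProbabilityTheory (beta beta_eq_betaIntegralReal)

section BetaIntegral

lemma image_div_one_add_Ioi_zero : (fun x : ℝ ↦ x / (1 + x)) '' Ioi 0 = Ioo 0 1 := by
  ext y
  constructor
  · rintro ⟨x, hx : 0 < x, rfl⟩
    exact ⟨by positivity, (div_lt_one (by positivity)).2 (by linarith)⟩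
  · rintro ⟨hy₀, hy₁⟩
    have hy : 0 < 1 - y := sub_pos.2 hy₁
    exact ⟨y / (1 - y), div_pos hy₀ hy, by field_simp; ring⟩

lemma monotoneOn_div_one_add : MonotoneOn (fun x : ℝ ↦ x / (1 + x)) (Ioi 0) := by
  intro x (hx : 0 < x) y (hy : 0 < y) hxy
  exact (div_le_div_iff₀ (by positivity) (by positivity)).2 (by linarith)

lemma integral_Ioo_zero_one_eq_integral_Ioi {E : Type*} [NormedAddCommGroup E] [NormedSpace ℝ E]
    (g : ℝ → E) :
    ∫ y in Ioo (0 : ℝ) 1, g y = ∫ x in Ioi (0 : ℝ), ((1 + x) ^ 2)⁻¹ • g (x / (1 + x)) := by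
  rw [← image_div_one_add_Ioi_zero]
  refine integral_image_eq_integral_deriv_smul_of_monotoneOn measurableSet_Ioi (fun x hx ↦ ?_)
    monotoneOn_div_one_add g
  have hx₁ : 1 + x ≠ 0 := by linarith [mem_Ioi.1 hx]
  have hderiv := (hasDerivAt_id' x).div ((hasDerivAt_id' x).const_add 1) hx₁
  exact (hderiv.congr_deriv (by ring)).hasDerivWithinAt

variable {α β : ℝ}

lemma integral_Ioo_rpow_mul_one_sub_rpow (hα : 0 < α) (hβ : 0 < β) :
    ∫ y in Ioo (0 : ℝ) 1, y ^ (α - 1) * (1 - y) ^ (β - 1) = beta α β := by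
  have hcast : Complex.betaIntegral α β =
      ((∫ y in Ioo (0 : ℝ) 1, y ^ (α - 1) * (1 - y) ^ (β - 1) : ℝ) : ℂ) := by
    rw [Complex.betaIntegral, intervalIntegral.integral_of_le zero_le_one,
      integral_Ioc_eq_integral_Ioo, ← integral_complex_ofReal]
    refine setIntegral_congr_fun measurableSet_Ioo fun y hy ↦ ?_
    simp only [Complex.ofReal_mul, Complex.ofReal_cpow hy.1.le,
      Complex.ofReal_cpow (sub_pos.2 hy.2).le, Complex.ofReal_sub, Complex.ofReal_one]
  rw [beta_eq_betaIntegralReal α β hα hβ, hcast, Complex.ofReal_re]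

lemma integral_Ioi_rpow_mul_one_add_rpow (hα : 0 < α) (hβ : 0 < β) :
    ∫ x in Ioi (0 : ℝ), x ^ (α - 1) * (1 + x) ^ (-(α + β)) = beta α β := by
  rw [← integral_Ioo_rpow_mul_one_sub_rpow hα hβ, integral_Ioo_zero_one_eq_integral_Ioi]
  refine setIntegral_congr_fun measurableSet_Ioi fun x (hx : 0 < x) ↦ ?_
  have hx₁ : 0 < 1 + x := by positivity
  have hsub : 1 - x / (1 + x) = (1 + x)⁻¹ := by field_simp; ring
  have hexp : -(α + β) = -2 - (α - 1) - (β - 1) := by ring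
  simp only [smul_eq_mul]
  rw [hsub, div_rpow hx.le hx₁.le, inv_rpow hx₁.le, hexp, rpow_sub hx₁, rpow_sub hx₁,
    rpow_neg hx₁.le, rpow_two]
  ring

lemma integral_Ioi_rpow_mul_one_add_mul_rpow {c : ℝ} (hc : 0 < c) (hα : 0 < α) (hβ : 0 < β) :
    ∫ x in Ioi (0 : ℝ), x ^ (α - 1) * (1 + c * x) ^ (-(α + β)) = c ^ (-α) * beta α β := by
  have hscale := integral_comp_mul_left_Ioi'
    (fun x : ℝ ↦ x ^ (α - 1) * (1 + x) ^ (-(α + β))) 0 hc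
  rw [mul_zero, integral_Ioi_rpow_mul_one_add_rpow hα hβ, smul_eq_mul] at hscale
  rw [← hscale, ← integral_const_mul, ← integral_const_mul]
  refine setIntegral_congr_fun measurableSet_Ioi fun x (hx : 0 < x) ↦ ?_
  have hc_cancel : c ^ (-α) * (c * c ^ (α - 1)) = 1 := by
    rw [mul_comm c, ← rpow_add_one hc.ne', sub_add_cancel, ← rpow_add hc, neg_add_cancel, rpow_zero]
  simp only [mul_rpow hc.le hx.le]
  calc x ^ (α - 1) * (1 + c * x) ^ (-(α + β))
      = c ^ (-α) * (c * c ^ (α - 1)) * (x ^ (α - 1) * (1 + c * x) ^ (-(α + β))) := by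
        rw [hc_cancel, one_mul]
    _ = c ^ (-α) * (c * (c ^ (α - 1) * x ^ (α - 1) * (1 + c * x) ^ (-(α + β)))) := by ring

lemma beta_div_beta_one {p b : ℝ} (hb : 0 < b) :
    beta (p + 1) (b - p) / beta 1 b = Gamma (p + 1) * Gamma (b - p) / Gamma b := by
  have hΓ : Gamma (1 + b) ≠ 0 := (Gamma_pos_of_pos (by positivity)).ne'
  have hsum : p + 1 + (b - p) = 1 + b := by ring
  rw [beta, beta, hsum, Gamma_one, one_mul, div_div_div_cancel_right₀ hΓ]

end BetaIntegral

section GeneralizedPareto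

/-- The density at `x ≥ 0` of the one-sided generalized Pareto distribution with scale `σ` and
shape `κ`. It is not cut off to `0` on the negative half-line, so it is only meant to be integrated
over `Ioi 0`. -/
noncomputable def genParetoDensity (σ κ x : ℝ) : ℝ :=
  (1 / σ) * (1 + κ * x / σ) ^ (-(1 + κ) / κ)

variable {σ κ : ℝ}

lemma genParetoDensity_rpow (hσ : 0 < σ) (hκ : 0 < κ) (q : ℝ) {x : ℝ} (hx : 0 ≤ x) :
    genParetoDensity σ κ x ^ q = σ ^ (-q) * (1 + κ / σ * x) ^ (-(q + q / κ)) := by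
  have hbase : 0 ≤ 1 + κ / σ * x := by positivity
  have hexp : -(1 + κ) / κ * q = -(q + q / κ) := by field_simp; ring
  rw [genParetoDensity, mul_div_right_comm, mul_rpow (by positivity) (by positivity),
    ← rpow_mul hbase, hexp, one_div, inv_rpow hσ.le, rpow_neg hσ.le]

lemma integral_rpow_mul_genParetoDensity_rpow (hσ : 0 < σ) (hκ : 0 < κ) {q p : ℝ} (hp : -1 < p)
    (hqp : 0 < q - 1 - p + q / κ) :
    ∫ x in Ioi (0 : ℝ), x ^ p * genParetoDensity σ κ x ^ q =
      σ ^ (-q) * ((σ / κ) ^ (p + 1) * beta (p + 1) (q - 1 - p + q / κ)) := by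
  have hbeta := integral_Ioi_rpow_mul_one_add_mul_rpow (div_pos hκ hσ)
    (neg_lt_iff_pos_add.1 hp) hqp
  rw [rpow_neg_eq_inv_rpow, inv_div] at hbeta
  rw [← hbeta, ← integral_const_mul]
  refine setIntegral_congr_fun measurableSet_Ioi fun x (hx : 0 < x) ↦ ?_
  have hp' : p + 1 - 1 = p := by ring
  have hexp : p + 1 + (q - 1 - p + q / κ) = q + q / κ := by ring
  simp only [genParetoDensity_rpow hσ hκ q hx.le, hp', hexp]
  ring

lemma integral_genParetoDensity_rpow (hσ : 0 < σ) (hκ : 0 < κ) {q : ℝ} (hq : 0 < q - 1 + q / κ) :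
    ∫ x in Ioi (0 : ℝ), genParetoDensity σ κ x ^ q =
      σ ^ (-q) * (σ / κ * beta 1 (q - 1 + q / κ)) := by
  simpa using
    integral_rpow_mul_genParetoDensity_rpow hσ hκ (p := 0) (by norm_num) (by simpa using hq)

theorem stmt_4_general (hσ : 0 < σ) (hκ : 0 < κ) {q p : ℝ} (hp : -1 < p)
    (hq : 0 < q - 1 + q / κ) (hqp : 0 < q - 1 - p + q / κ) :
    (∫ x in Ioi (0 : ℝ), x ^ p * genParetoDensity σ κ x ^ q) /
        (∫ x in Ioi (0 : ℝ), genParetoDensity σ κ x ^ q) =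
      (σ / κ) ^ p * Gamma (p + 1) * Gamma (q - 1 - p + q / κ) / Gamma (q - 1 + q / κ) := by
  have hscale : σ / κ ≠ 0 := (div_pos hσ hκ).ne'
  have hshift : q - 1 - p + q / κ = q - 1 + q / κ - p := by ring
  rw [integral_rpow_mul_genParetoDensity_rpow hσ hκ hp hqp, integral_genParetoDensity_rpow hσ hκ hq,
    mul_div_mul_left _ _ (rpow_pos_of_pos hσ _).ne', mul_div_mul_comm, rpow_add_one hscale,
    mul_div_cancel_right₀ _ hscale, hshift, beta_div_beta_one hq]
  ring

end GeneralizedPareto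

theorem stmt_4 (σ κ : ℝ) (hσ : 0 < σ) (hκ : 0 < κ) (n m : ℕ) (hn : 1 ≤ n)
    (hdom : (n : ℝ) - 1 - m + n / κ > 0)
    (f : ℝ → ℝ) (hf : ∀ x, f x = (1 / σ) * (1 + κ * x / σ) ^ (-(1 + κ) / κ)) :
    (∫ x in Ioi (0 : ℝ), x ^ m * f x ^ n) / (∫ x in Ioi (0 : ℝ), f x ^ n) =
      (σ / κ) ^ m * (Nat.factorial m) *
        Real.Gamma ((n : ℝ) - 1 - m + n / κ) / Real.Gamma ((n : ℝ) - 1 + n / κ) := by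
  obtain rfl : f = genParetoDensity σ κ := funext hf
  have hm : (0 : ℝ) ≤ m := m.cast_nonneg
  simpa only [rpow_natCast, Gamma_nat_eq_factorial] using
    stmt_4_general hσ hκ (neg_one_lt_zero.trans_le hm) (by linarith) hdom
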